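/- Let t₁, t₂, t₃ be real numbers and set s_k = 1 + t_ℓ t_m for each cyclic permutation (k,ℓ,m) of (1,2,3); assume s₁ s₂ s₃ ≠ 0. Set X' = (1 + t₁²)/(s₂ s₃) and Y' = −t₁ (t₃ − t₁)(t₂ − t₁)/(s₂ s₃). Then: (i) the point (X', −Y') lies on the elliptic curve Y² = (X s₁ − 1)(X s₂ − 1)(X s₃ − 1), i.e. (Y')² = (X' s₁ − 1)(X' s₂ − 1)(X' s₃ − 1); and (ii) the three points (1, t₁ t₂ t₃), (X', −Y') and (1/s₁, 0) of the plane are collinear, i.e. the determinant of the 3×3 matrix with rows (1, t₁t₂t₃, 1), (X', −Y', 1), (1/s₁, 0, 1) vanishes. -/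

import Mathlib

/-!
Since `t₁t₂t₃ = t₁(s₁ - 1)`, the line `Y = t₁(X s₁ - 1)` passes through `(1, t₁t₂t₃)` and
`(1/s₁, 0)`. Substituting it into the cubic leaves, besides the root `1/s₁`, a quadratic in `X`
with root `1`; Vieta's formula makes the remaining root `(1 + t₁²)/(s₂s₃)`, which is `X'`.
-/

section CommRing

variable {R : Type*} [CommRing R]

theorem det_eq_zero_of_mem_line {x₁ y₁ x₂ y₂ x₃ y₃ m c : R}
    (h₁ : y₁ = m * x₁ + c) (h₂ : y₂ = m * x₂ + c) (h₃ : y₃ = m * x₃ + c) :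
    Matrix.det !![x₁, y₁, 1; x₂, y₂, 1; x₃, y₃, 1] = 0 := by
  subst h₁ h₂ h₃
  simp only [Matrix.det_fin_three, Matrix.of_apply, Matrix.cons_val]
  ring

theorem cubic_sub_sq_chord {t₁ t₂ t₃ s₁ s₂ s₃ : R}
    (hs₁ : s₁ = 1 + t₂ * t₃) (hs₂ : s₂ = 1 + t₃ * t₁) (hs₃ : s₃ = 1 + t₁ * t₂) (x : R) :
    (x * s₁ - 1) * (x * s₂ - 1) * (x * s₃ - 1) - (t₁ * (x * s₁ - 1)) ^ 2 =
      (x * s₁ - 1) * (x - 1) * (s₂ * s₃ * x - (1 + t₁ ^ 2)) := by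
  have residual_quadratic : (x * s₂ - 1) * (x * s₃ - 1) - t₁ ^ 2 * (x * s₁ - 1) =
      (x - 1) * (s₂ * s₃ * x - (1 + t₁ ^ 2)) := by
    subst hs₁ hs₂ hs₃
    ring
  linear_combination (x * s₁ - 1) * residual_quadratic

theorem sq_chord_eq_cubic {t₁ t₂ t₃ s₁ s₂ s₃ x : R}
    (hs₁ : s₁ = 1 + t₂ * t₃) (hs₂ : s₂ = 1 + t₃ * t₁) (hs₃ : s₃ = 1 + t₁ * t₂)
    (hx : s₂ * s₃ * x = 1 + t₁ ^ 2) :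
    (t₁ * (x * s₁ - 1)) ^ 2 = (x * s₁ - 1) * (x * s₂ - 1) * (x * s₃ - 1) := by
  symm
  rw [← sub_eq_zero, cubic_sub_sq_chord hs₁ hs₂ hs₃, hx, sub_self, mul_zero]

end CommRing

section Field

variable {K : Type*} [Field K]

theorem chord_one_add_sq_div {t₁ t₂ t₃ s₁ s₂ s₃ : K}
    (hs₁ : s₁ = 1 + t₂ * t₃) (hs₂ : s₂ = 1 + t₃ * t₁) (hs₃ : s₃ = 1 + t₁ * t₂)
    (hne : s₂ * s₃ ≠ 0) :
    t₁ * ((1 + t₁ ^ 2) / (s₂ * s₃) * s₁ - 1) = t₁ * (t₃ - t₁) * (t₂ - t₁) / (s₂ * s₃) := by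
  have numerator_eq : (1 + t₁ ^ 2) * s₁ - s₂ * s₃ = (t₃ - t₁) * (t₂ - t₁) := by
    subst hs₁ hs₂ hs₃
    ring
  rw [div_mul_eq_mul_div, div_sub_one hne, numerator_eq, mul_div_assoc', mul_assoc]

theorem stmt_11_general (t1 t2 t3 s1 s2 s3 X' Y' : K)
    (hs1 : s1 = 1 + t2 * t3) (hs2 : s2 = 1 + t3 * t1) (hs3 : s3 = 1 + t1 * t2)
    (hne : s1 * s2 * s3 ≠ 0)
    (hX : X' = (1 + t1 ^ 2) / (s2 * s3))
    (hY : Y' = -(t1 * (t3 - t1) * (t2 - t1)) / (s2 * s3)) :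
    Y' ^ 2 = (X' * s1 - 1) * (X' * s2 - 1) * (X' * s3 - 1) ∧
    Matrix.det !![1, t1 * t2 * t3, 1; X', -Y', 1; 1 / s1, 0, 1] = 0 := by
  obtain ⟨hs1_ne, hs23_ne⟩ : s1 ≠ 0 ∧ s2 * s3 ≠ 0 := mul_ne_zero_iff.mp (mul_assoc s1 s2 s3 ▸ hne)
  have hX_mul : s2 * s3 * X' = 1 + t1 ^ 2 := by rw [hX, mul_div_cancel₀ _ hs23_ne]
  have neg_Y_eq_chord : -Y' = t1 * (X' * s1 - 1) := by
    rw [hX, chord_one_add_sq_div hs1 hs2 hs3 hs23_ne, hY, neg_div, neg_neg]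
  constructor
  · rw [← neg_sq, neg_Y_eq_chord, sq_chord_eq_cubic hs1 hs2 hs3 hX_mul]
  · apply det_eq_zero_of_mem_line (m := t1 * s1) (c := -t1)
    · linear_combination -t1 * hs1
    · linear_combination neg_Y_eq_chord
    · rw [mul_assoc, mul_one_div_cancel hs1_ne, mul_one, add_neg_cancel]

end Field

/-- The point `(X', −Y')` associated to `k₁ ∈ W` lies on the elliptic curve
`Y² = ∏ (X s_j − 1)` and is collinear with `(1, t₁t₂t₃)` and `(1/s₁, 0)`. -/
theorem stmt_11 (t1 t2 t3 s1 s2 s3 X' Y' : ℝ)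
    (hs1 : s1 = 1 + t2 * t3) (hs2 : s2 = 1 + t3 * t1) (hs3 : s3 = 1 + t1 * t2)
    (hne : s1 * s2 * s3 ≠ 0)
    (hX : X' = (1 + t1 ^ 2) / (s2 * s3))
    (hY : Y' = -(t1 * (t3 - t1) * (t2 - t1)) / (s2 * s3)) :
    Y' ^ 2 = (X' * s1 - 1) * (X' * s2 - 1) * (X' * s3 - 1) ∧
    Matrix.det !![1, t1 * t2 * t3, 1; X', -Y', 1; 1 / s1, 0, 1] = 0 :=
  stmt_11_general t1 t2 t3 s1 s2 s3 X' Y' hs1 hs2 hs3 hne hX hY
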